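/- Let f(z) = Σ_{n≥1} cₙ zⁿ be an injective holomorphic map on the unit disk 𝔻 with image Ω. Then the area of Ω equals π·Σ_{n≥1} n|cₙ|². -/

import Mathlib

open Complex Metric MeasureTheory

lemma aux_orth (k : ℤ) :
    ∫ θ in (-Real.pi)..Real.pi, cexp (k * I * θ) = if k = 0 then 2 * (Real.pi : ℂ) else 0 := by
  split_ifs with h
  · subst h
    simp
    ring
  · have hk : (k : ℂ) * I ≠ 0 := by simp [h]
    rw [integral_exp_mul_complex hk]
    have : cexp (k * I * (Real.pi : ℝ)) = cexp (k * I * ((-Real.pi : ℝ) : ℂ)) := by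
      rw [Complex.exp_eq_exp_iff_exists_int]
      exact ⟨k, by push_cast; ring⟩
    rw [this]
    simp

lemma aux_norm (n : ℕ) (a : ℂ) (θ : ℝ) : ‖a * cexp (n * I * θ)‖ = ‖a‖ := by
  rw [norm_mul, show (n : ℂ) * I * θ = ((n * θ : ℝ) : ℂ) * I by push_cast; ring,
    Complex.norm_exp_ofReal_mul_I, mul_one]

lemma aux_cont (a : ℕ → ℂ) (ha : Summable fun n => ‖a n‖) :
    Continuous fun θ : ℝ => ∑' n, a n * cexp (n * I * θ) := by
  refine continuous_tsum (fun n => by fun_prop) ha fun n θ => (aux_norm n _ θ).le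

lemma aux_coef (a : ℕ → ℂ) (ha : Summable fun n => ‖a n‖) (m : ℕ) :
    ∫ θ in (-Real.pi)..Real.pi, (∑' n, a n * cexp (n * I * θ)) * cexp (-(m * I * θ))
      = 2 * Real.pi * a m := by
  have h := intervalIntegral.hasSum_integral_of_dominated_convergence
    (μ := volume) (a := -Real.pi) (b := Real.pi)
    (F := fun (n : ℕ) (θ : ℝ) => a n * cexp (n * I * θ) * cexp (-(m * I * θ)))
    (f := fun θ : ℝ => (∑' n, a n * cexp (n * I * θ)) * cexp (-(m * I * θ)))
    (fun n _ => ‖a n‖)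
    (fun n => Continuous.aestronglyMeasurable (by fun_prop))
    (fun n => .of_forall fun θ _ => by
      rw [norm_mul, aux_norm, show -((m : ℂ) * I * θ) = ((-(m * θ) : ℝ) : ℂ) * I by
        push_cast; ring, Complex.norm_exp_ofReal_mul_I, mul_one])
    (.of_forall fun θ _ => ha)
    (by simp)
    (.of_forall fun θ _ => by
      apply HasSum.mul_right
      apply Summable.hasSum
      apply Summable.of_norm
      simpa only [aux_norm] using ha)
  rw [← h.tsum_eq, tsum_eq_single m]
  · have := aux_orth 0
    simp only [mul_assoc, ← Complex.exp_add]
    simp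
    ring
  · intro n hn
    have := aux_orth (n - m)
    rw [if_neg (by omega)] at this
    rw [← mul_zero (a n), ← this, ← intervalIntegral.integral_const_mul]
    congr 1
    ext θ
    rw [mul_assoc, ← Complex.exp_add]
    congr 2
    push_cast
    ring

lemma aux_parseval (a : ℕ → ℂ) (ha : Summable fun n => ‖a n‖) :
    HasSum (fun n => 2 * Real.pi * ‖a n‖ ^ 2)
      (∫ θ in (-Real.pi)..Real.pi, ‖∑' n, a n * cexp (n * I * θ)‖ ^ 2) := by
  set G : ℝ → ℂ := fun θ => ∑' n, a n * cexp (n * I * θ) with hG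
  have hGc : Continuous G := aux_cont a ha
  have hb : ∀ θ, ‖G θ‖ ≤ ∑' n, ‖a n‖ := fun θ =>
    tsum_of_norm_bounded ha.hasSum fun n => (aux_norm n _ θ).le
  have h := intervalIntegral.hasSum_integral_of_dominated_convergence
    (μ := volume) (a := -Real.pi) (b := Real.pi)
    (F := fun (n : ℕ) (θ : ℝ) => a n * cexp (n * I * θ) * (starRingEnd ℂ) (G θ))
    (f := fun θ : ℝ => G θ * (starRingEnd ℂ) (G θ))
    (fun n _ => ‖a n‖ * ∑' n, ‖a n‖)
    (fun n => Continuous.aestronglyMeasurable (by fun_prop))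
    (fun n => .of_forall fun θ _ => by
      rw [norm_mul, aux_norm, RCLike.norm_conj]
      exact mul_le_mul_of_nonneg_left (hb θ) (norm_nonneg _))
    (.of_forall fun θ _ => ha.mul_right _)
    (by simp)
    (.of_forall fun θ _ => by
      apply HasSum.mul_right
      apply Summable.hasSum
      apply Summable.of_norm
      simpa only [aux_norm] using ha)
  have e1 : ∀ n : ℕ, ∫ θ in (-Real.pi)..Real.pi, a n * cexp (n * I * θ) * (starRingEnd ℂ) (G θ)
      = ((2 * Real.pi * ‖a n‖ ^ 2 : ℝ) : ℂ) := by
    intro n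
    have := congrArg (starRingEnd ℂ) (aux_coef a ha n)
    have h2 : ∫ θ in (-Real.pi)..Real.pi, (starRingEnd ℂ) (G θ * cexp (-(n * I * θ)))
        = (starRingEnd ℂ) (∫ θ in (-Real.pi)..Real.pi, G θ * cexp (-(n * I * θ))) := by
      rw [intervalIntegral.integral_of_le (by linarith [Real.pi_pos]),
        intervalIntegral.integral_of_le (by linarith [Real.pi_pos])]
      exact integral_conj
    rw [← h2] at this
    calc _ = ∫ θ in (-Real.pi)..Real.pi, a n * (starRingEnd ℂ) (G θ * cexp (-(n * I * θ))) := by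
          congr 1
          ext θ
          rw [map_mul, ← Complex.exp_conj]
          simp
          ring
      _ = _ := by
          rw [intervalIntegral.integral_const_mul, this]
          simp only [map_mul, Complex.conj_ofReal]
          push_cast
          rw [← Complex.mul_conj']
          try simp only [map_ofNat]
          ring
  have e2 : ∫ θ in (-Real.pi)..Real.pi, G θ * (starRingEnd ℂ) (G θ)
      = ((∫ θ in (-Real.pi)..Real.pi, ‖G θ‖ ^ 2 : ℝ) : ℂ) := by
    rw [← intervalIntegral.integral_ofReal]
    congr 1
    ext θ
    rw [Complex.mul_conj']
    push_cast
    rfl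
  simp only [e1, e2] at h
  exact_mod_cast h

/-- power series of the derivative -/
lemma aux_deriv (f : ℂ → ℂ) (c : ℕ → ℂ)
    (hsum : ∀ z ∈ ball (0:ℂ) 1, HasSum (fun n : ℕ => c n * z ^ n) (f z))
    (z : ℂ) (hz : z ∈ ball (0:ℂ) 1) :
    HasSum (fun n : ℕ => ((n + 1 : ℕ) * c (n + 1)) * z ^ n) (deriv f z) := by
  have hz' : ‖z‖ < 1 := by simpa using hz
  obtain ⟨ρ, h1, h2⟩ := exists_between hz'
  have hρ : 0 ≤ ρ := (norm_nonneg z).trans h1.le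
  have hu : Summable fun n => ‖c n‖ * ρ ^ n := by
    have := (hsum (ρ : ℂ) (by simpa [abs_of_nonneg hρ] using h2)).summable.norm
    simpa [abs_of_nonneg hρ] using this
  have h := Complex.hasSum_deriv_of_summable_norm (F := fun n w => c n * w ^ n)
    (U := ball (0:ℂ) ρ) (z := z) hu (fun i => by fun_prop) isOpen_ball
    (fun i w hw => by
      have : ‖w‖ < ρ := by simpa using hw
      rw [norm_mul, norm_pow]
      gcongr) (by simpa using h1)
  have e : deriv (fun w : ℂ => ∑' n, c n * w ^ n) z = deriv f z := by
    apply Filter.EventuallyEq.deriv_eq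
    filter_upwards [isOpen_ball.mem_nhds hz] with w hw using (hsum w hw).tsum_eq
  rw [e, ← hasSum_nat_add_iff' 1] at h
  simp at h
  convert! h using 2
  push_cast
  ring

lemma aux_circle (f : ℂ → ℂ) (c : ℕ → ℂ)
    (hsum : ∀ z ∈ ball (0:ℂ) 1, HasSum (fun n : ℕ => c n * z ^ n) (f z))
    (r : ℝ) (h0 : 0 < r) (h1 : r < 1) :
    ∫⁻ θ in Set.Ioo (-Real.pi) Real.pi,
      ENNReal.ofReal (‖deriv f (Complex.polarCoord.symm (r, θ))‖ ^ 2)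
      = ∑' n : ℕ, ENNReal.ofReal (2 * Real.pi * (((n + 1 : ℕ) : ℝ) * ‖c (n+1)‖) ^ 2 * r ^ (2 * n)) := by
  set a : ℕ → ℂ := fun n => ((n + 1 : ℕ) * c (n + 1)) * r ^ n with ha
  have hnorm : ∀ n, ‖a n‖ = (((n + 1 : ℕ) : ℝ) * ‖c (n+1)‖) * r ^ n := by
    intro n
    rw [ha]
    simp only [norm_mul, norm_pow, Complex.norm_natCast, Complex.norm_real, Real.norm_eq_abs,
      abs_of_pos h0]
  have hs : Summable fun n => ‖a n‖ :=
    (aux_deriv f c hsum r (by simpa [abs_of_pos h0] using h1)).summable.norm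
  have hd : ∀ θ : ℝ, deriv f (Complex.polarCoord.symm (r, θ)) = ∑' n, a n * cexp (n * I * θ) := by
    intro θ
    rw [← (aux_deriv f c hsum (Complex.polarCoord.symm (r, θ))
      (by rw [mem_ball_zero_iff, Complex.norm_polarCoord_symm]; simpa [abs_of_pos h0] using h1)).tsum_eq]
    congr 1
    ext n
    rw [Complex.polarCoord_symm_apply, Complex.ofReal_cos, Complex.ofReal_sin,
      ← Complex.exp_mul_I, mul_pow, ← Complex.exp_nat_mul]
    simp only [ha]
    rw [mul_assoc, mul_assoc, mul_assoc, mul_assoc]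
    congr 5
    ring
  have hp := aux_parseval a hs
  simp only [hd]
  have hc := aux_cont a hs
  rw [← ofReal_integral_eq_lintegral_ofReal, ← integral_Ioc_eq_integral_Ioo,
    ← intervalIntegral.integral_of_le (by linarith [Real.pi_pos]), ← hp.tsum_eq,
    ENNReal.ofReal_tsum_of_nonneg (fun n => by positivity) hp.summable]
  · congr 1
    ext n
    rw [hnorm]
    congr 1
    ring
  · have : Continuous fun θ : ℝ => ‖∑' n, a n * cexp (n * I * θ)‖ ^ 2 := by fun_prop
    exact this.integrableOn_Icc.mono_set Set.Ioo_subset_Icc_self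
  · exact .of_forall fun θ => by positivity

lemma aux_radial (n : ℕ) (K : ℝ) (hK : 0 ≤ K) :
    ∫⁻ r in Set.Ioo (0:ℝ) 1, ENNReal.ofReal r * ENNReal.ofReal (K * r ^ (2 * n))
      = ENNReal.ofReal (K / (2 * n + 2)) := by
  have : ∫⁻ r in Set.Ioo (0:ℝ) 1, ENNReal.ofReal r * ENNReal.ofReal (K * r ^ (2 * n))
      = ∫⁻ r in Set.Ioo (0:ℝ) 1, ENNReal.ofReal (K * r ^ (2 * n + 1)) := by
    apply setLIntegral_congr_fun measurableSet_Ioo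
    intro r hr
    simp only
    rw [← ENNReal.ofReal_mul hr.1.le]
    congr 1
    ring
  rw [this, ← ofReal_integral_eq_lintegral_ofReal, ← integral_Ioc_eq_integral_Ioo,
    ← intervalIntegral.integral_of_le zero_le_one, intervalIntegral.integral_const_mul,
    integral_pow]
  · congr 1
    push_cast
    simp
    ring
  · have : Continuous fun r : ℝ => K * r ^ (2 * n + 1) := by fun_prop
    exact this.integrableOn_Icc.mono_set Set.Ioo_subset_Icc_self
  · rw [Filter.EventuallyLE, ae_restrict_iff' measurableSet_Ioo]
    exact .of_forall fun r hr => mul_nonneg hK (pow_nonneg hr.1.le _)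

lemma aux_area (f : ℂ → ℂ) (c : ℕ → ℂ)
    (hf : DifferentiableOn ℂ f (ball 0 1))
    (hinj : Set.InjOn f (ball 0 1))
    (hsum : ∀ z ∈ ball (0:ℂ) 1, HasSum (fun n : ℕ => c n * z ^ n) (f z)) :
    volume (f '' ball (0:ℂ) 1)
      = ∑' n : ℕ, ENNReal.ofReal (Real.pi * (((n + 1 : ℕ) : ℝ) * ‖c (n + 1)‖ ^ 2)) := by
  have hder : ∀ x ∈ ball (0:ℂ) 1, HasFDerivWithinAt f
      ((ContinuousLinearMap.toSpanSingleton ℂ (deriv f x)).restrictScalars ℝ) (ball (0:ℂ) 1) x := by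
    intro x hx
    have := (hf.differentiableAt (isOpen_ball.mem_nhds hx)).hasDerivAt
    exact (this.hasFDerivAt.restrictScalars ℝ).hasFDerivWithinAt
  rw [← lintegral_abs_det_fderiv_eq_addHaar_image volume measurableSet_ball hder hinj]
  have hdet : ∀ x : ℂ, |((ContinuousLinearMap.toSpanSingleton ℂ (deriv f x)).restrictScalars ℝ).det|
      = ‖deriv f x‖ ^ 2 := by
    intro x
    simp [ContinuousLinearMap.det, LinearMap.det_restrictScalars,
      Algebra.norm_complex_eq, Complex.normSq_eq_norm_sq]
  simp only [hdet]
  have hm : Measurable fun z : ℂ => ENNReal.ofReal (‖deriv f z‖ ^ 2) := by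
    have := measurable_deriv f
    fun_prop
  have hps : Measurable fun p : ℝ × ℝ => Complex.polarCoord.symm p := by
    simp only [Complex.polarCoord_symm_apply]
    fun_prop
  rw [← lintegral_indicator measurableSet_ball, ← Complex.lintegral_comp_polarCoord_symm,
    polarCoord_target, Measure.volume_eq_prod, setLIntegral_prod]
  swap
  · apply Measurable.aemeasurable
    refine Measurable.mul (by fun_prop) ?_
    exact (hm.indicator measurableSet_ball).comp hps
  have step : ∀ r ∈ Set.Ioi (0:ℝ), (∫⁻ θ in Set.Ioo (-Real.pi) Real.pi, ENNReal.ofReal r •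
      (ball (0:ℂ) 1).indicator (fun z => ENNReal.ofReal (‖deriv f z‖ ^ 2))
        (Complex.polarCoord.symm (r, θ)))
      = (Set.Ioo (0:ℝ) 1).indicator (fun r => ∑' n : ℕ, ENNReal.ofReal r * ENNReal.ofReal
        (2 * Real.pi * (((n + 1 : ℕ) : ℝ) * ‖c (n+1)‖) ^ 2 * r ^ (2 * n))) r := by
    intro r hr
    have hr0 : 0 < r := hr
    by_cases h1 : r < 1
    · rw [Set.indicator_of_mem (show r ∈ Set.Ioo (0:ℝ) 1 from ⟨hr0, h1⟩), ENNReal.tsum_mul_left,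
        ← aux_circle f c hsum r hr0 h1, ← lintegral_const_mul']
      · congr 1
        ext θ
        rw [Set.indicator_of_mem, smul_eq_mul]
        rw [mem_ball_zero_iff, Complex.norm_polarCoord_symm]
        simpa [abs_of_pos hr0] using h1
      · exact ENNReal.ofReal_ne_top
    · rw [Set.indicator_of_notMem (fun h => h1 h.2)]
      rw [← lintegral_zero (μ := volume.restrict (Set.Ioo (-Real.pi) Real.pi))]
      congr 1
      ext θ
      rw [Set.indicator_of_notMem, smul_zero]
      rw [mem_ball_zero_iff, Complex.norm_polarCoord_symm]
      simpa [abs_of_pos hr0] using h1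
  rw [setLIntegral_congr_fun measurableSet_Ioi step, setLIntegral_indicator measurableSet_Ioo,
    Set.inter_eq_left.mpr Set.Ioo_subset_Ioi_self, lintegral_tsum]
  · congr 1
    ext n
    rw [aux_radial n _ (by positivity)]
    congr 1
    push_cast
    have : (n : ℝ) + 1 ≠ 0 := by positivity
    field_simp
  · intro n
    apply Measurable.aemeasurable
    fun_prop

theorem area_formula (f : ℂ → ℂ) (c : ℕ → ℂ)
    (hf : DifferentiableOn ℂ f (ball 0 1))
    (hinj : Set.InjOn f (ball 0 1))
    (hc0 : c 0 = 0)
    (hsum : ∀ z ∈ ball (0:ℂ) 1, HasSum (fun n : ℕ => c n * z ^ n) (f z)) :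
    (volume (f '' ball (0:ℂ) 1)).toReal
      = Real.pi * ∑' n : ℕ, (n : ℝ) * ‖c n‖ ^ 2 := by
  rw [aux_area f c hf hinj hsum]
  have h0 : ∑' n : ℕ, ENNReal.ofReal (Real.pi * (((n + 1 : ℕ) : ℝ) * ‖c (n + 1)‖ ^ 2))
      = ∑' n : ℕ, ENNReal.ofReal (Real.pi * ((n : ℝ) * ‖c n‖ ^ 2)) := by
    rw [tsum_eq_zero_add' (f := fun n : ℕ => ENNReal.ofReal (Real.pi * ((n : ℝ) * ‖c n‖ ^ 2)))
      ENNReal.summable]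
    simp
  rw [h0, ENNReal.tsum_toReal_eq (fun _ => ENNReal.ofReal_ne_top), ← tsum_mul_left]
  congr 1
  ext n
  rw [ENNReal.toReal_ofReal (by positivity)]
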